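/- Let k ≥ 1 and m ≥ 1, let h, r be fixed segmented embeddings, and fix a segment index w < k and a coordinate i < m. The partial derivative of the SEEK score f₄(h, r, t) with respect to the coordinate (t_w)_i of the tail embedding equals ∑_{0 ≤ x, y < k} 𝟙[w = w_{x,y}] · s_{x,y} · (r_x)_i · (h_y)_i, where 𝟙[w = w_{x,y}] is 1 if w = w_{x,y} and 0 otherwise. -/

import Mathlib

open Finset

/-- Multi-linear dot product of three vectors in ℝ^m. -/
def mdot {m : ℕ} (a b c : Fin m → ℝ) : ℝ := ∑ i : Fin m, a i * b i * c i

/-- Sign s_{x,y}: -1 if x is odd and x + y ≥ k, else 1. -/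
def sSign {k : ℕ} (x y : Fin k) : ℝ :=
  if x.val % 2 = 1 ∧ k ≤ x.val + y.val then -1 else 1

/-- Tail index w_{x,y}: y if x even, (x+y) mod k if x odd. -/
def wIdx {k : ℕ} (x y : Fin k) : Fin k :=
  if x.val % 2 = 0 then y else ⟨(x.val + y.val) % k, Nat.mod_lt _ x.pos⟩

/-- SEEK scoring function f₄. -/
def f4 {k m : ℕ} (h r t : Fin k → Fin m → ℝ) : ℝ :=
  ∑ x : Fin k, ∑ y : Fin k, sSign x y * mdot (r x) (h y) (t (wIdx x y))

/-- All-segments scoring function f₂. -/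
def f2 {k m : ℕ} (h r t : Fin k → Fin m → ℝ) : ℝ :=
  ∑ x : Fin k, ∑ y : Fin k, ∑ w : Fin k, mdot (r x) (h y) (t w)

/-- Signed scoring function f₃. -/
def f3 {k m : ℕ} (h r t : Fin k → Fin m → ℝ) : ℝ :=
  ∑ x : Fin k, ∑ y : Fin k, ∑ w : Fin k, sSign x y * mdot (r x) (h y) (t w)

/-- The trilinear form `mdot` has derivative `a i * b i` in the `i`-th coordinate of its last
argument. -/
theorem hasDerivAt_mdot_update {m : ℕ} (a b v : Fin m → ℝ) (i : Fin m) (c : ℝ) :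
    HasDerivAt (fun c : ℝ => mdot a b (Function.update v i c)) (a i * b i) c := by
  have hsum : HasDerivAt (fun c : ℝ => mdot a b (Function.update v i c))
      (∑ j : Fin m, a j * b j * (Pi.single i (1 : ℝ) : Fin m → ℝ) j) c :=
    HasDerivAt.fun_sum fun j _ =>
      (hasDerivAt_pi.1 (hasDerivAt_update v i c) j).const_mul (a j * b j)
  simpa [Pi.single_apply] using hsum

/-- Partial derivative of f₄ with respect to the coordinate (t_w)_i of the tail
embedding: ∂f₄/∂(t_w)_i = ∑_{x,y} 𝟙[w = w_{x,y}] · s_{x,y} · (r_x)_i · (h_y)_i. -/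
theorem f4_deriv_tail (k m : ℕ) (hk : 1 ≤ k) (hm : 1 ≤ m)
    (h r t : Fin k → Fin m → ℝ) (w : Fin k) (i : Fin m) :
    HasDerivAt
      (fun c : ℝ => f4 h r (Function.update t w (Function.update (t w) i c)))
      (∑ x : Fin k, ∑ y : Fin k,
        (if w = wIdx x y then (1 : ℝ) else 0) * sSign x y * (r x i * h y i))
      (t w i) := by
  refine HasDerivAt.fun_sum fun x _ => HasDerivAt.fun_sum fun y _ => ?_
  by_cases hw : w = wIdx x y
  · subst hw
    simpa using (hasDerivAt_mdot_update (r x) (h y) (t (wIdx x y)) i _).const_mul (sSign x y)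
  · simpa [hw, Function.update_of_ne (Ne.symm hw)] using
      hasDerivAt_const (t w i) (sSign x y * mdot (r x) (h y) (t (wIdx x y)))
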